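/- Let d ≥ 1 and k ≥ 0 be integers, let C > 0, t₀ > 0, and let u₀ : ℝ^d → ℝ be measurable with |u₀(x)| ≤ C e^{−|x|²/(4t₀)} for almost every x. Let u(x,t) := (G(·,t) * u₀)(x) and let u_k be the heat-kernel derivative approximation of order k built from u₀. Then for every t > 0, sup_{x ∈ ℝ^d} |u(x,t) − u_k(x,t)| ≤ C (t₀/t)^{(k+d+1)/2} (1 + (k+1)/d)^{−d/12} · (k+d)! / ((k+1)! (d−1)!). -/

import Mathlib

open MeasureTheory Real Filter

noncomputable section

/-- Partial derivative in the `i`-th coordinate direction on `ℝ^d`. -/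
def pd (d : ℕ) (i : Fin d) (f : EuclideanSpace ℝ (Fin d) → ℝ) :
    EuclideanSpace ℝ (Fin d) → ℝ :=
  fun x => fderiv ℝ f x (EuclideanSpace.single i 1)

/-- Mixed partial derivative `D^α = ∂₁^{α₁} ⋯ ∂_d^{α_d}`. -/
def Dmul (d : ℕ) (α : Fin d → ℕ) (f : EuclideanSpace ℝ (Fin d) → ℝ) :
    EuclideanSpace ℝ (Fin d) → ℝ :=
  ((List.finRange d).map (fun i => (pd d i)^[α i])).foldr (· ∘ ·) id f

/-- Heat kernel `G(x,t) = (4πt)^{-d/2} exp(-|x|²/(4t))` on `ℝ^d`. -/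
def heatKernel (d : ℕ) (x : EuclideanSpace ℝ (Fin d)) (t : ℝ) : ℝ :=
  (4 * π * t) ^ (-(d : ℝ) / 2) * Real.exp (-‖x‖ ^ 2 / (4 * t))

/-- The heat-kernel derivative approximation of order `k` built from `u₀`. -/
def heatApprox (d k : ℕ) (u₀ : EuclideanSpace ℝ (Fin d) → ℝ)
    (x : EuclideanSpace ℝ (Fin d)) (t : ℝ) : ℝ :=
  ∑ j ∈ Finset.range (k + 1), ∑ α ∈ Finset.Nat.antidiagonalTuple d j,
    ((-1 : ℝ) ^ (∑ i, α i) / ∏ i, ((α i).factorial : ℝ)) *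
      (∫ y, (∏ i, y i ^ α i) * u₀ y) * Dmul d α (fun z => heatKernel d z t) x

/-- The remainder function `F_α`. Here `k` should satisfy `|α| = k+1`. -/
def Falpha (d k : ℕ) (α : Fin d → ℕ) (f : EuclideanSpace ℝ (Fin d) → ℝ)
    (x : EuclideanSpace ℝ (Fin d)) : ℝ :=
  (-1 : ℝ) ^ (∑ i, α i) * ∫ t in (0:ℝ)..1,
    ((k : ℝ) + 1) * (1 - t) ^ k / t ^ (d + ∑ i, α i) *
      ((∏ i, x i ^ α i) / ∏ i, ((α i).factorial : ℝ)) * f (t⁻¹ • x)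

/-- Physicists' Hermite polynomial `H_n(x) = (-1)^n e^{x²} (d/dx)^n e^{-x²}`. -/
def hPoly (n : ℕ) (x : ℝ) : ℝ :=
  (-1 : ℝ) ^ n * Real.exp (x ^ 2) * iteratedDeriv n (fun y => Real.exp (-y ^ 2)) x

/-!
The function `u_k(x, t)` is the integral of `u₀` against the Taylor polynomial of order `k` at
`s = 0` of `s ↦ G(x - s y, t)`, evaluated at `s = 1`, so `u - u_k` is the integral of `u₀` against
the Taylor remainder. On a line, after completing the square, `G(·, t)` is a one-dimensional
Gaussian times a constant that is at most its maximum. Since the Gaussian is its own Fourier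
transform, its `n`-th derivative is bounded by its `n`-th absolute moment. Integrating the resulting
remainder bound, a multiple of `‖y‖ ^ (k + 1)`, against the Gaussian majorant of `u₀` gives the
error bound with a quotient of Gamma values, `n = k + 1`. By the duplication formula, comparing it
with the quotient of factorials amounts to
`(1 + n/d)^(d/12) Γ((n+1)/2) Γ((d+1)/2) ≤ √π Γ((n+d+1)/2)`, which is proved by induction from `d`
to `d + 2`. The case `d = 1` follows from log-convexity of `Γ`.
-/

open scoped ContDiff FourierTransform

section SmoothFunctions

variable {E F : Type*} [NormedAddCommGroup E] [NormedSpace ℝ E]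
  [NormedAddCommGroup F] [NormedSpace ℝ F]

variable (E F) in
/-- The space `C^∞(E, F)`, as a subspace of all functions `E → F`. Directional derivatives are
linear operators on it, which they are not on all functions since `fderiv` has junk values. -/
def smoothFunctions : Submodule ℝ (E → F) where
  carrier := {f | ContDiff ℝ ∞ f}
  add_mem' hf hg := Set.mem_ofPred.mpr ((Set.mem_ofPred.mp hf).add (Set.mem_ofPred.mp hg))
  zero_mem' := Set.mem_ofPred.mpr contDiff_const
  smul_mem' c _ hf := Set.mem_ofPred.mpr ((Set.mem_ofPred.mp hf).const_smul c)

namespace smoothFunctions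

theorem mem_iff {f : E → F} : f ∈ smoothFunctions E F ↔ ContDiff ℝ ∞ f := by
  simp [smoothFunctions, ← SetLike.mem_coe]

theorem contDiff (f : smoothFunctions E F) : ContDiff ℝ ∞ (f : E → F) :=
  mem_iff.mp f.2

theorem contDiff_fderiv (f : smoothFunctions E F) : ContDiff ℝ ∞ (fderiv ℝ (f : E → F)) :=
  (contDiff f).fderiv_right (by simp)

theorem differentiable (f : smoothFunctions E F) : Differentiable ℝ (f : E → F) :=
  (contDiff f).differentiable (by simp)

theorem differentiable_fderiv (f : smoothFunctions E F) :
    Differentiable ℝ (fderiv ℝ (f : E → F)) :=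
  (contDiff_fderiv f).differentiable (by simp)

/-- The directional derivative `∂_v` on `C^∞(E, F)`, as a linear function of the direction `v`
with values in the linear operators. -/
def dirDeriv : E →ₗ[ℝ] Module.End ℝ (smoothFunctions E F) where
  toFun v :=
    { toFun := fun f => ⟨fun x => fderiv ℝ f x v,
        mem_iff.mpr ((contDiff_fderiv f).clm_apply contDiff_const)⟩
      map_add' := fun f g => by
        ext x
        exact congrArg (· v) (fderiv_add (differentiable f x) (differentiable g x))
      map_smul' := fun c f => by
        ext x
        exact congrArg (· v) (fderiv_const_smul (differentiable f x) c) }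
  map_add' v w := by ext f x; exact map_add (fderiv ℝ (f : E → F) x) v w
  map_smul' c v := by ext f x; exact map_smul (fderiv ℝ (f : E → F) x) c v

theorem coe_dirDeriv (v : E) (f : smoothFunctions E F) :
    (dirDeriv v f : E → F) = fun x => fderiv ℝ f x v :=
  rfl

theorem commute_dirDeriv (v w : E) :
    Commute (dirDeriv (F := F) v) (dirDeriv w) := by
  ext f x
  simp only [Module.End.mul_apply, coe_dirDeriv]
  rw [fderiv_clm_apply (differentiable_fderiv f x) (differentiableAt_const w),
    fderiv_clm_apply (differentiable_fderiv f x) (differentiableAt_const v)]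
  have two_le : minSmoothness ℝ 2 ≤ ∞ := by
    rw [minSmoothness_of_isRCLikeNormedField]
    exact WithTop.coe_le_coe.mpr le_top
  simpa using ((contDiff f).contDiffAt.isSymmSndFDerivAt two_le).eq v w

theorem iteratedDeriv_comp_line (f : smoothFunctions E F) (x v : E) (n : ℕ) :
    iteratedDeriv n (fun s : ℝ => (f : E → F) (x + s • v)) =
      fun s => ((dirDeriv v ^ n) f : E → F) (x + s • v) := by
  induction n with
  | zero => simp
  | succ n ih =>
    funext s
    have hline : HasDerivAt (fun s : ℝ => x + s • v) v s := by
      simpa using ((hasDerivAt_id s).smul_const v).const_add x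
    rw [iteratedDeriv_succ, ih, pow_succ', Module.End.mul_apply, coe_dirDeriv]
    exact ((differentiable _ _).hasFDerivAt.comp_hasDerivAt s hline).deriv

end smoothFunctions

variable {d : ℕ}

theorem list_prod_map_smul {K A ι : Type*} [CommSemiring K] [Semiring A] [Algebra K A]
    (c : ι → K) (a : ι → A) (l : List ι) :
    (l.map fun i => c i • a i).prod = (l.map c).prod • (l.map a).prod := by
  induction l with
  | nil => simp
  | cons i l ih => simp [ih, smul_smul, mul_comm]

theorem noncommProd_univ_fin {M : Type*} [Monoid M] (f : Fin d → M) (comm) :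
    Finset.univ.noncommProd f comm = ((List.finRange d).map f).prod :=
  Multiset.noncommProd_coe _ _

theorem sum_smul_pow_of_commute {K A : Type*} [Field K] [CharZero K] [Semiring A] [Algebra K A]
    {D : Fin d → A} (hD : ∀ i j, Commute (D i) (D j)) (y : Fin d → K) (n : ℕ) :
    (∑ i, y i • D i) ^ n = (n.factorial : K) • ∑ α ∈ Finset.Nat.antidiagonalTuple d n,
      ((∏ i, y i ^ α i) / ∏ i, ((α i).factorial : K)) •
        ((List.finRange d).map fun i => D i ^ α i).prod := by
  rw [Finset.sum_pow_eq_sum_piAntidiag_of_commute _ _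
      fun i _ j _ _ => ((hD i j).smul_left _).smul_right _,
    Finset.piAntidiag_univ_fin_eq_antidiagonalTuple, Finset.smul_sum]
  refine Finset.sum_congr rfl fun α hα => ?_
  have prod_factorial_ne_zero : ∏ i, ((α i).factorial : K) ≠ 0 :=
    Finset.prod_ne_zero_iff.mpr fun i _ => Nat.cast_ne_zero.mpr (Nat.factorial_ne_zero _)
  have multinomial_eq : (Nat.multinomial Finset.univ α : K) =
      n.factorial / ∏ i, ((α i).factorial : K) := by
    rw [eq_div_iff prod_factorial_ne_zero, mul_comm, ← Finset.Nat.mem_antidiagonalTuple.mp hα]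
    exact_mod_cast Nat.multinomial_spec Finset.univ α
  rw [noncommProd_univ_fin, ← nsmul_eq_mul, ← Nat.cast_smul_eq_nsmul K, multinomial_eq]
  simp only [smul_pow, list_prod_map_smul, smul_smul, ← Fin.prod_univ_def]
  congr 1
  ring

theorem pd_iterate (i : Fin d) (n : ℕ) (f : smoothFunctions (EuclideanSpace ℝ (Fin d)) ℝ) :
    (pd d i)^[n] f = (smoothFunctions.dirDeriv (EuclideanSpace.single i (1 : ℝ)) ^ n) f := by
  induction n with
  | zero => rfl
  | succ n ih => rw [Function.iterate_succ_apply', ih, pow_succ']; rfl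

theorem Dmul_eq_prod_dirDeriv (α : Fin d → ℕ)
    (f : smoothFunctions (EuclideanSpace ℝ (Fin d)) ℝ) :
    Dmul d α f = ((List.finRange d).map fun i =>
      smoothFunctions.dirDeriv (EuclideanSpace.single i (1 : ℝ)) ^ α i).prod f := by
  unfold Dmul
  induction List.finRange d with
  | nil => rfl
  | cons i l ih => simp [ih, pd_iterate]

theorem dirDeriv_eq_sum_single (y : EuclideanSpace ℝ (Fin d)) :
    smoothFunctions.dirDeriv (F := ℝ) y =
      ∑ i, y i • smoothFunctions.dirDeriv (EuclideanSpace.single i (1 : ℝ)) := by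
  conv_lhs => rw [← (EuclideanSpace.basisFun (Fin d) ℝ).sum_repr y]
  simp

/-- Since partial derivatives commute on smooth functions, this is the multinomial theorem for
`(∑ i, y i ∂_i) ^ n`, the `n`-th derivative along the line. -/
theorem iteratedDeriv_comp_line_div_factorial {f : EuclideanSpace ℝ (Fin d) → ℝ}
    (hf : ContDiff ℝ ∞ f) (x y : EuclideanSpace ℝ (Fin d)) (n : ℕ) :
    iteratedDeriv n (fun s : ℝ => f (x + s • y)) 0 / n.factorial =
      ∑ α ∈ Finset.Nat.antidiagonalTuple d n,
        (∏ i, y i ^ α i) / (∏ i, ((α i).factorial : ℝ)) * Dmul d α f x := by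
  lift f to smoothFunctions (EuclideanSpace ℝ (Fin d)) ℝ using smoothFunctions.mem_iff.mpr hf
  have factorial_ne_zero : (n.factorial : ℝ) ≠ 0 := by positivity
  rw [smoothFunctions.iteratedDeriv_comp_line]
  dsimp only
  rw [zero_smul, add_zero, dirDeriv_eq_sum_single,
    sum_smul_pow_of_commute (fun _ _ => smoothFunctions.commute_dirDeriv _ _) (fun i => y i)]
  simp only [LinearMap.smul_apply, LinearMap.sum_apply, Submodule.coe_smul, Submodule.coe_sum,
    Pi.smul_apply, Finset.sum_apply, smul_eq_mul, Dmul_eq_prod_dirDeriv]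
  rw [mul_div_cancel_left₀ _ factorial_ne_zero]

end SmoothFunctions

section Taylor

theorem abs_sub_sum_iteratedDeriv_le {φ : ℝ → ℝ} {n : ℕ} (hφ : ContDiff ℝ (n + 1) φ) {M : ℝ}
    (hM : ∀ s, |iteratedDeriv (n + 1) φ s| ≤ M) (a x : ℝ) :
    |φ x - ∑ j ∈ Finset.range (n + 1), iteratedDeriv j φ a / j.factorial * (x - a) ^ j| ≤
      M * |x - a| ^ (n + 1) / (n + 1).factorial := by
  rcases eq_or_ne a x with rfl | hax
  · simp [Finset.sum_range_succ']
  obtain ⟨s, -, hs⟩ := taylor_mean_remainder_lagrange_iteratedDeriv hax hφ.contDiffOn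
  have taylor_eq : taylorWithinEval φ n (Set.uIcc a x) a x =
      ∑ j ∈ Finset.range (n + 1), iteratedDeriv j φ a / j.factorial * (x - a) ^ j := by
    rw [taylor_within_apply]
    refine Finset.sum_congr rfl fun j hj => ?_
    have hjn : (j : ℕ∞ω) ≤ n + 1 := by exact_mod_cast (Finset.mem_range.mp hj).le
    rw [iteratedDerivWithin_eq_iteratedDeriv (uniqueDiffOn_uIcc hax)
      (hφ.of_le hjn).contDiffAt Set.left_mem_uIcc, smul_eq_mul]
    ring
  rw [← taylor_eq, hs, abs_div, abs_mul, abs_pow, Nat.abs_cast]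
  gcongr
  exact hM s

theorem abs_add_sub_sum_Dmul_le {d n : ℕ} {f : EuclideanSpace ℝ (Fin d) → ℝ}
    (hf : ContDiff ℝ ∞ f) (x y : EuclideanSpace ℝ (Fin d)) {M : ℝ}
    (hM : ∀ s, |iteratedDeriv (n + 1) (fun s : ℝ => f (x + s • y)) s| ≤ M) :
    |f (x + y) - ∑ j ∈ Finset.range (n + 1), ∑ α ∈ Finset.Nat.antidiagonalTuple d j,
        (∏ i, y i ^ α i) / (∏ i, ((α i).factorial : ℝ)) * Dmul d α f x| ≤
      M / (n + 1).factorial := by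
  have hline : ContDiff ℝ (n + 1) fun s : ℝ => f (x + s • y) :=
    (hf.of_le (by exact_mod_cast le_top)).comp (by fun_prop)
  simpa [iteratedDeriv_comp_line_div_factorial hf] using
    abs_sub_sum_iteratedDeriv_le hline hM 0 1

end Taylor

section GaussianMoments

theorem ae_norm_mul_le {E : Type*} [Norm E] [MeasurableSpace E] {μ : Measure E}
    {w u : E → ℝ} {n : ℕ} {A B b : ℝ} (hw : ∀ y, |w y| ≤ A * ‖y‖ ^ n)
    (hu : ∀ᵐ y ∂μ, |u y| ≤ B * rexp (-b * ‖y‖ ^ 2)) :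
    ∀ᵐ y ∂μ, ‖w y * u y‖ ≤ A * B * (‖y‖ ^ (n : ℝ) * rexp (-b * ‖y‖ ^ 2)) := by
  filter_upwards [hu] with y hy
  rw [Real.norm_eq_abs, abs_mul, Real.rpow_natCast]
  calc |w y| * |u y| ≤ (A * ‖y‖ ^ n) * (B * rexp (-b * ‖y‖ ^ 2)) :=
        mul_le_mul (hw y) hy (abs_nonneg _) ((abs_nonneg _).trans (hw y))
    _ = _ := by ring

variable {E : Type*} [NormedAddCommGroup E] [InnerProductSpace ℝ E] [FiniteDimensional ℝ E]
  [Nontrivial E] [MeasurableSpace E] [BorelSpace E]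

theorem pow_pred_smul_rpow_mul {m : ℕ} (hm : 0 < m) {r : ℝ} (hr : 0 < r) (p c : ℝ) :
    r ^ (m - 1) • (r ^ p * c) = r ^ (p + m - 1) * c := by
  rw [smul_eq_mul, ← mul_assoc, ← Real.rpow_natCast, ← Real.rpow_add hr, Nat.cast_pred hm]
  ring_nf

theorem integrable_norm_rpow_mul_exp_neg_mul_sq {b p : ℝ} (hb : 0 < b)
    (hp : 0 < p + Module.finrank ℝ E) :
    Integrable fun y : E => ‖y‖ ^ p * rexp (-b * ‖y‖ ^ 2) := by
  rw [integrable_fun_norm_addHaar volume (f := fun r => r ^ p * rexp (-b * r ^ 2))]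
  exact (integrableOn_rpow_mul_exp_neg_mul_sq hb
    (by linarith : -1 < p + Module.finrank ℝ E - 1)).congr_fun
    (fun r hr => (pow_pred_smul_rpow_mul Module.finrank_pos hr _ _).symm) measurableSet_Ioi

theorem finrank_mul_volume_real_unit_ball :
    Module.finrank ℝ E * volume.real (Metric.ball (0 : E) 1) =
      2 * √π ^ Module.finrank ℝ E / Gamma (Module.finrank ℝ E / 2) := by
  have finrank_pos : (0 : ℝ) < Module.finrank ℝ E := by exact_mod_cast Module.finrank_pos
  rw [Measure.real, InnerProductSpace.volume_ball, Gamma_add_one (by positivity),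
    ENNReal.ofReal_one, one_pow, one_mul, ENNReal.toReal_ofReal (by positivity)]
  field_simp

theorem integral_norm_rpow_mul_exp_neg_mul_sq {b p : ℝ} (hb : 0 < b)
    (hp : 0 < p + Module.finrank ℝ E) :
    ∫ y : E, ‖y‖ ^ p * rexp (-b * ‖y‖ ^ 2) =
      √π ^ Module.finrank ℝ E / Gamma (Module.finrank ℝ E / 2) *
        (b ^ (-(p + Module.finrank ℝ E) / 2) * Gamma ((p + Module.finrank ℝ E) / 2)) := by
  have radial_integral : ∫ r in Set.Ioi (0 : ℝ),
      r ^ (Module.finrank ℝ E - 1) • (r ^ p * rexp (-b * r ^ 2)) =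
      b ^ (-(p + Module.finrank ℝ E) / 2) * (1 / 2) * Gamma ((p + Module.finrank ℝ E) / 2) := by
    rw [setIntegral_congr_fun measurableSet_Ioi fun r hr =>
      pow_pred_smul_rpow_mul Module.finrank_pos hr _ _]
    simpa using integral_rpow_mul_exp_neg_mul_rpow two_pos
      (by linarith : -1 < p + Module.finrank ℝ E - 1) hb
  rw [integral_fun_norm_addHaar volume fun r => r ^ p * rexp (-b * r ^ 2), radial_integral,
    nsmul_eq_mul, smul_eq_mul, ← mul_assoc, finrank_mul_volume_real_unit_ball]
  ring

theorem integrable_mul_of_abs_le {w u : E → ℝ} {n : ℕ} {A B b : ℝ} (hb : 0 < b)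
    (hwm : AEStronglyMeasurable w) (hw : ∀ y, |w y| ≤ A * ‖y‖ ^ n)
    (hum : AEStronglyMeasurable u) (hu : ∀ᵐ y, |u y| ≤ B * rexp (-b * ‖y‖ ^ 2)) :
    Integrable fun y => w y * u y :=
  have finrank_pos : (0 : ℝ) < Module.finrank ℝ E := by exact_mod_cast Module.finrank_pos
  ((integrable_norm_rpow_mul_exp_neg_mul_sq hb (by positivity)).const_mul (A * B)).mono'
    (hwm.mul hum) (ae_norm_mul_le hw hu)

theorem abs_integral_mul_le {w u : E → ℝ} {n : ℕ} {A B b : ℝ} (hb : 0 < b)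
    (hw : ∀ y, |w y| ≤ A * ‖y‖ ^ n) (hu : ∀ᵐ y, |u y| ≤ B * rexp (-b * ‖y‖ ^ 2)) :
    |∫ y, w y * u y| ≤ A * B * ∫ y : E, ‖y‖ ^ (n : ℝ) * rexp (-b * ‖y‖ ^ 2) := by
  have finrank_pos : (0 : ℝ) < Module.finrank ℝ E := by exact_mod_cast Module.finrank_pos
  rw [← integral_const_mul]
  exact norm_integral_le_of_norm_le ((integrable_norm_rpow_mul_exp_neg_mul_sq hb
    (by positivity)).const_mul (A * B)) (ae_norm_mul_le hw hu)

end GaussianMoments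

section GaussianDerivatives

theorem norm_iteratedDeriv_fourier_le {E : Type*} [NormedAddCommGroup E] [NormedSpace ℂ E]
    {f : ℝ → E} {n : ℕ} (hf : ∀ m ≤ n, Integrable fun v : ℝ => v ^ m • f v) (ξ : ℝ) :
    ‖iteratedDeriv n (𝓕 f) ξ‖ ≤ (2 * π) ^ n * ∫ v, |v| ^ n * ‖f v‖ := by
  have hf' : ∀ m : ℕ, (m : ℕ∞) ≤ n → Integrable fun v : ℝ => v ^ m • f v :=
    fun m hm => hf m (by exact_mod_cast hm)
  rw [iteratedDeriv_fourier hf' le_rfl, Real.fourier_eq, ← integral_const_mul]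
  refine (norm_integral_le_integral_norm _).trans_eq (integral_congr_ae <| .of_forall fun v => ?_)
  simp only [RCLike.inner_apply, ringHom_apply, neg_mul, Circle.norm_smul, norm_smul, norm_pow,
    norm_neg, Complex.norm_mul, Complex.norm_ofNat, Complex.norm_real, norm_eq_abs,
    abs_of_pos pi_pos, Complex.norm_I, mul_one]
  ring

theorem norm_iteratedDeriv_ofReal_comp {f : ℝ → ℝ} {n : ℕ} (hf : ContDiff ℝ n f) (x : ℝ) :
    ‖iteratedDeriv n (fun v => (f v : ℂ)) x‖ = |iteratedDeriv n f x| := by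
  rw [← Real.norm_eq_abs, ← norm_iteratedFDeriv_eq_norm_iteratedDeriv,
    ← norm_iteratedFDeriv_eq_norm_iteratedDeriv]
  exact Complex.ofRealLI.norm_iteratedFDeriv_comp_left hf.contDiffAt le_rfl

theorem rpow_neg_natCast_div_two {a : ℝ} (ha : 0 ≤ a) (m : ℕ) :
    a ^ (-m / 2 : ℝ) = (√a ^ m)⁻¹ := by
  rw [neg_div, Real.rpow_neg ha, Real.rpow_div_two_eq_sqrt _ ha, Real.rpow_natCast]

theorem abs_iteratedDeriv_exp_neg_pi_mul_sq_le (n : ℕ) (x : ℝ) :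
    |iteratedDeriv n (fun v : ℝ => rexp (-π * v ^ 2)) x| ≤
      (2 * √π) ^ n * (Gamma ((n + 1) / 2) / √π) := by
  have fourier_eq : 𝓕 (fun v : ℝ => (rexp (-π * v ^ 2) : ℂ)) =
      fun v : ℝ => (rexp (-π * v ^ 2) : ℂ) := by
    simpa using fourier_gaussian_pi (b := 1) (by simp)
  have integrable_moment (m : ℕ) : Integrable fun v : ℝ => v ^ m • (rexp (-π * v ^ 2) : ℂ) := by
    simpa [Real.rpow_natCast] using (integrable_rpow_mul_exp_neg_mul_sq pi_pos (s := m)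
      (by linarith [(m.cast_nonneg : (0 : ℝ) ≤ m)])).ofReal (𝕜 := ℂ)
  have moment_eq : ∫ v : ℝ, |v| ^ n * rexp (-π * v ^ 2) =
      π ^ (-(n + 1 : ℝ) / 2) * Gamma ((n + 1) / 2) := by
    have := integral_norm_rpow_mul_exp_neg_mul_sq (E := ℝ) (p := n) pi_pos
      (by rw [Module.finrank_self]; positivity)
    simpa [-one_div, Gamma_one_half_eq, div_self (Real.sqrt_ne_zero'.mpr pi_pos)] using this
  have pi_pow_eq : (2 * π) ^ n * π ^ (-(n + 1 : ℝ) / 2) = (2 * √π) ^ n / √π := by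
    have rpow_eq : π ^ (-(n + 1 : ℝ) / 2) = (√π ^ (n + 1))⁻¹ := by
      exact_mod_cast rpow_neg_natCast_div_two pi_pos.le (n + 1)
    have pow_eq : π ^ n = √π ^ n * √π ^ n := by rw [← mul_pow, Real.mul_self_sqrt pi_pos.le]
    rw [rpow_eq, mul_pow, mul_pow, pow_eq, pow_succ]
    field_simp
  have := norm_iteratedDeriv_fourier_le (n := n) (fun m _ => integrable_moment m) x
  rw [fourier_eq, norm_iteratedDeriv_ofReal_comp (by fun_prop)] at this
  refine this.trans_eq ?_
  simp only [Complex.norm_real, Real.norm_eq_abs, Real.abs_exp, moment_eq]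
  rw [← mul_assoc, pi_pow_eq]
  ring

theorem iteratedDeriv_comp_add_mul {f : ℝ → ℝ} {n : ℕ} (hf : ContDiff ℝ n f) (p c s : ℝ) :
    iteratedDeriv n (fun s => f (p + c * s)) s = c ^ n * iteratedDeriv n f (p + c * s) := by
  have hsm : ContDiff ℝ n (fun w => f (p + w)) := hf.comp (by fun_prop)
  have h := congrFun (iteratedDeriv_comp_const_mul hsm c) s
  rwa [iteratedDeriv_comp_const_add] at h

theorem abs_iteratedDeriv_exp_neg_mul_sq_le {b : ℝ} (hb : 0 ≤ b) (n : ℕ) (x : ℝ) :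
    |iteratedDeriv n (fun v : ℝ => rexp (-b * v ^ 2)) x| ≤
      (2 * √b) ^ n * (Gamma ((n + 1) / 2) / √π) := by
  have exp_eq : (fun v : ℝ => rexp (-b * v ^ 2)) =
      fun v => rexp (-π * (0 + √(b / π) * v) ^ 2) := by
    funext v
    rw [zero_add, mul_pow, Real.sq_sqrt (by positivity)]
    field_simp
  rw [exp_eq, iteratedDeriv_comp_add_mul (f := fun v => rexp (-π * v ^ 2)) (by fun_prop), abs_mul,
    abs_of_nonneg (by positivity)]
  calc _ ≤ √(b / π) ^ n * ((2 * √π) ^ n * (Gamma ((n + 1) / 2) / √π)) := by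
        gcongr
        exact abs_iteratedDeriv_exp_neg_pi_mul_sq_le n _
    _ = _ := by
        rw [← mul_assoc, ← mul_pow, Real.sqrt_div hb]
        field_simp

variable {E : Type*} [NormedAddCommGroup E] [InnerProductSpace ℝ E]

theorem exists_norm_add_smul_sq_eq (x y : E) :
    ∃ r p : ℝ, 0 ≤ r ∧ ∀ s : ℝ, ‖x + s • y‖ ^ 2 = r + (p + ‖y‖ * s) ^ 2 := by
  rcases eq_or_ne y 0 with rfl | hy
  · exact ⟨‖x‖ ^ 2, 0, by positivity, by simp⟩
  have norm_y_pos : 0 < ‖y‖ := norm_pos_iff.mpr hy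
  refine ⟨‖x‖ ^ 2 - (inner ℝ x y / ‖y‖) ^ 2, inner ℝ x y / ‖y‖, ?_, fun s => ?_⟩
  · rw [sub_nonneg, sq_le_sq, abs_div, abs_norm, abs_norm, div_le_iff₀ norm_y_pos]
    exact abs_real_inner_le_norm x y
  · rw [norm_add_sq_real, real_inner_smul_right, norm_smul, mul_pow, Real.norm_eq_abs, sq_abs]
    field_simp
    ring

theorem abs_iteratedDeriv_exp_neg_mul_norm_sq_le {b : ℝ} (hb : 0 ≤ b) (x y : E) (n : ℕ) (s : ℝ) :
    |iteratedDeriv n (fun s : ℝ => rexp (-b * ‖x + s • y‖ ^ 2)) s| ≤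
      (2 * √b * ‖y‖) ^ n * (Gamma ((n + 1) / 2) / √π) := by
  obtain ⟨r, p, hr, norm_sq_eq⟩ := exists_norm_add_smul_sq_eq x y
  have exp_eq : (fun s : ℝ => rexp (-b * ‖x + s • y‖ ^ 2)) =
      fun s => rexp (-b * r) * rexp (-b * (p + ‖y‖ * s) ^ 2) := by
    funext s
    rw [norm_sq_eq, ← Real.exp_add, mul_add]
  have exp_le_one : rexp (-b * r) ≤ 1 := Real.exp_le_one_iff.mpr (by nlinarith)
  rw [exp_eq, iteratedDeriv_const_mul_field,
    iteratedDeriv_comp_add_mul (f := fun v => rexp (-b * v ^ 2)) (by fun_prop), abs_mul,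
    abs_of_pos (Real.exp_pos _), abs_mul, abs_of_nonneg (by positivity : 0 ≤ ‖y‖ ^ n)]
  calc _ ≤ 1 * (‖y‖ ^ n * ((2 * √b) ^ n * (Gamma ((n + 1) / 2) / √π))) := by
        gcongr
        exact abs_iteratedDeriv_exp_neg_mul_sq_le hb n _
    _ = _ := by ring

end GaussianDerivatives

section GammaInequalities

theorem Gamma_add_half_sq_le {x : ℝ} (hx : 0 < x) :
    Gamma (x + 1 / 2) ^ 2 ≤ Gamma x * Gamma (x + 1) := by
  have := Gamma_mul_add_mul_le_rpow_Gamma_mul_rpow_Gamma hx (show 0 < x + 1 by positivity)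
    one_half_pos one_half_pos (add_halves 1)
  rw [← Real.mul_rpow (by positivity) (by positivity), ← Real.sqrt_eq_rpow] at this
  rw [← Real.le_sqrt' (Gamma_pos_of_pos (by positivity))]
  convert this using 2
  ring

theorem one_add_rpow_mul_Gamma_le {a : ℝ} (ha : 1 ≤ a) :
    (1 + a) ^ (1 / 12 : ℝ) * Gamma ((a + 1) / 2) ≤ √π * Gamma (a / 2 + 1) := by
  have Gamma_sq_le : Gamma ((a + 1) / 2) ^ 2 ≤ 2 / a * Gamma (a / 2 + 1) ^ 2 := by
    have := Gamma_add_half_sq_le (show 0 < a / 2 by positivity)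
    rw [← add_div] at this
    refine this.trans_eq ?_
    rw [Gamma_add_one (by positivity)]
    field_simp
  have rpow_le : (1 + a) ^ (1 / 6 : ℝ) ≤ 1 + 1 / 6 * a :=
    rpow_one_add_le_one_add_mul_self (by linarith) (by norm_num) (by norm_num)
  have rpow_mul_le_pi : (1 + a) ^ (1 / 6 : ℝ) * (2 / a) ≤ π :=
    calc (1 + a) ^ (1 / 6 : ℝ) * (2 / a) ≤ (1 + 1 / 6 * a) * (2 / a) := by gcongr
      _ = 2 / a + 1 / 3 := by field_simp; ring
      _ ≤ 2 / 1 + 1 / 3 := by gcongr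
      _ ≤ π := by linarith [pi_gt_three]
  refine le_of_sq_le_sq ?_ (by positivity)
  calc ((1 + a) ^ (1 / 12 : ℝ) * Gamma ((a + 1) / 2)) ^ 2
      = (1 + a) ^ (1 / 6 : ℝ) * Gamma ((a + 1) / 2) ^ 2 := by
        rw [mul_pow, ← Real.rpow_mul_natCast (by positivity)]
        norm_num
    _ ≤ (1 + a) ^ (1 / 6 : ℝ) * (2 / a * Gamma (a / 2 + 1) ^ 2) := by gcongr
    _ ≤ π * Gamma (a / 2 + 1) ^ 2 := by
        rw [← mul_assoc]
        gcongr
    _ = (√π * Gamma (a / 2 + 1)) ^ 2 := by rw [mul_pow, Real.sq_sqrt pi_pos.le]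

theorem one_add_div_rpow_step {a : ℝ} (ha : 0 ≤ a) (d : ℕ) :
    (1 + a / (d + 2 : ℕ)) ^ ((d + 2 : ℕ) / 12 : ℝ) * ((d + 1) / 2) ≤
      (1 + a / d) ^ (d / 12 : ℝ) * ((a + d + 1) / 2) := by
  have one_le : 1 ≤ 1 + a / (d + 2 : ℕ) := le_add_of_nonneg_right (by positivity)
  have rpow_le_rpow : (1 + a / (d + 2 : ℕ)) ^ (d / 12 : ℝ) ≤ (1 + a / d) ^ (d / 12 : ℝ) := by
    rcases d.eq_zero_or_pos with rfl | hd
    · simp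
    · gcongr
      omega
  have rpow_mul_le : (1 + a / (d + 2 : ℕ)) ^ (1 / 6 : ℝ) * ((d + 1) / 2) ≤ (a + d + 1) / 2 :=
    calc _ ≤ (1 + a / (d + 2 : ℕ)) ^ (1 : ℝ) * ((d + 1 : ℝ) / 2) := by
          gcongr
          norm_num
      _ ≤ (1 + a / (d + 1)) * ((d + 1 : ℝ) / 2) := by
          rw [Real.rpow_one]
          push_cast
          gcongr
          norm_num
      _ = _ := by field_simp; ring
  calc _ = (1 + a / (d + 2 : ℕ)) ^ (d / 12 : ℝ) *
          ((1 + a / (d + 2 : ℕ)) ^ (1 / 6 : ℝ) * ((d + 1) / 2)) := by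
        rw [← mul_assoc, ← Real.rpow_add (by positivity)]
        push_cast
        ring_nf
    _ ≤ _ := mul_le_mul rpow_le_rpow rpow_mul_le (by positivity) (by positivity)

theorem one_add_div_rpow_mul_Gamma_mul_Gamma_le {a : ℝ} (ha : 1 ≤ a) (d : ℕ) :
    (1 + a / d) ^ (d / 12 : ℝ) * (Gamma ((a + 1) / 2) * Gamma ((d + 1) / 2)) ≤
      √π * Gamma ((a + d + 1) / 2) := by
  induction d using Nat.twoStepInduction with
  | zero => simp [-one_div, Gamma_one_half_eq, mul_comm]
  | one =>
    have := one_add_rpow_mul_Gamma_le ha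
    rw [show a / 2 + 1 = (a + 1 + 1) / 2 by ring] at this
    simpa using this
  | more d ih _ =>
    have Gamma_d : Gamma (((d + 2 : ℕ) + 1) / 2) = (d + 1) / 2 * Gamma ((d + 1) / 2) := by
      rw [← Gamma_add_one (by positivity)]
      push_cast
      ring_nf
    have Gamma_a_d : Gamma ((a + (d + 2 : ℕ) + 1) / 2) =
        (a + d + 1) / 2 * Gamma ((a + d + 1) / 2) := by
      rw [← Gamma_add_one (by positivity)]
      push_cast
      ring_nf
    calc _ = (1 + a / (d + 2 : ℕ)) ^ ((d + 2 : ℕ) / 12 : ℝ) * ((d + 1) / 2) *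
            (Gamma ((a + 1) / 2) * Gamma ((d + 1) / 2)) := by rw [Gamma_d]; ring
      _ ≤ (1 + a / d) ^ (d / 12 : ℝ) * ((a + d + 1) / 2) *
            (Gamma ((a + 1) / 2) * Gamma ((d + 1) / 2)) := by
          refine mul_le_mul_of_nonneg_right ?_ (by positivity)
          exact one_add_div_rpow_step (by positivity) d
      _ = (a + d + 1) / 2 * ((1 + a / d) ^ (d / 12 : ℝ) *
            (Gamma ((a + 1) / 2) * Gamma ((d + 1) / 2))) := by ring
      _ ≤ (a + d + 1) / 2 * (√π * Gamma ((a + d + 1) / 2)) := by gcongr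
      _ = _ := by rw [Gamma_a_d]; ring

theorem pred_factorial_mul_sqrt_pi {m : ℕ} (hm : 1 ≤ m) :
    (m - 1).factorial * √π = Gamma (m / 2) * Gamma ((m + 1) / 2) * 2 ^ (m - 1) := by
  have duplication := Gamma_mul_Gamma_add_half (m / 2)
  rw [← add_div, mul_div_cancel₀ _ two_ne_zero] at duplication
  rw [duplication, show (1 - m : ℝ) = -(m - 1 : ℕ) by rw [Nat.cast_pred hm]; ring,
    Real.rpow_neg zero_le_two, Real.rpow_natCast, ← Gamma_nat_eq_factorial, Nat.cast_pred hm,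
    sub_add_cancel]
  field_simp

theorem pred_factorial_add_div_pred_factorial (n : ℕ) {d : ℕ} (hd : 1 ≤ d) :
    ((n + d - 1).factorial / (d - 1).factorial : ℝ) =
      2 ^ n * (Gamma ((n + d) / 2) * Gamma ((n + d + 1) / 2)) /
        (Gamma (d / 2) * Gamma ((d + 1) / 2)) := by
  rw [← mul_div_mul_right _ _ (Real.sqrt_ne_zero'.mpr pi_pos), pred_factorial_mul_sqrt_pi hd,
    pred_factorial_mul_sqrt_pi (le_add_left hd), Nat.add_sub_assoc hd, pow_add]
  push_cast
  field_simp

theorem Gamma_mul_Gamma_div_Gamma_le {n d : ℕ} (hn : 1 ≤ n) (hd : 1 ≤ d) :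
    2 ^ n * Gamma ((n + 1) / 2) * Gamma ((n + d) / 2) / (√π * Gamma (d / 2)) ≤
      (1 + n / d : ℝ) ^ (-d / 12 : ℝ) * ((n + d - 1).factorial / (d - 1).factorial) := by
  have key := one_add_div_rpow_mul_Gamma_mul_Gamma_le (a := n) (by exact_mod_cast hn) d
  rw [pred_factorial_add_div_pred_factorial n hd, neg_div, Real.rpow_neg (by positivity),
    inv_mul_eq_div, div_div, div_le_div_iff₀ (by positivity) (by positivity)]
  linear_combination (Gamma ((n + d) / 2) * Gamma (d / 2) * 2 ^ n) * key

end GammaInequalities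

section HeatKernel

variable {d : ℕ}

/-- The Taylor polynomial of order `k` of `s ↦ G(x - s y, t)` at `s = 0`, evaluated at `s = 1`.
It is the integral kernel, in the variable `y`, of `u₀ ↦ heatApprox d k u₀ x t`. -/
def heatTaylor (d k : ℕ) (x y : EuclideanSpace ℝ (Fin d)) (t : ℝ) : ℝ :=
  ∑ j ∈ Finset.range (k + 1), ∑ α ∈ Finset.Nat.antidiagonalTuple d j,
    ((-1 : ℝ) ^ (∑ i, α i) / ∏ i, ((α i).factorial : ℝ)) * (∏ i, y i ^ α i) *
      Dmul d α (fun z => heatKernel d z t) x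

theorem sqrt_four_mul (a : ℝ) : √(4 * a) = 2 * √a := by
  rw [Real.sqrt_mul zero_le_four, show (4 : ℝ) = 2 ^ 2 by norm_num, Real.sqrt_sq zero_le_two]

theorem heatKernel_eq_exp_neg_mul (x : EuclideanSpace ℝ (Fin d)) (t : ℝ) :
    heatKernel d x t = (4 * π * t) ^ (-(d : ℝ) / 2) * rexp (-(1 / (4 * t)) * ‖x‖ ^ 2) := by
  rw [heatKernel]
  ring_nf

theorem contDiff_heatKernel (t : ℝ) :
    ContDiff ℝ ∞ fun x : EuclideanSpace ℝ (Fin d) => heatKernel d x t := by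
  have := contDiff_norm_sq ℝ (E := EuclideanSpace ℝ (Fin d)) (n := ∞)
  unfold heatKernel
  fun_prop

theorem abs_heatKernel_le (x : EuclideanSpace ℝ (Fin d)) {t : ℝ} (ht : 0 ≤ t) :
    |heatKernel d x t| ≤ (4 * π * t) ^ (-(d : ℝ) / 2) := by
  have exp_le_one : rexp (-(1 / (4 * t)) * ‖x‖ ^ 2) ≤ 1 :=
    Real.exp_le_one_iff.mpr (by rw [neg_mul, neg_nonpos]; positivity)
  rw [heatKernel_eq_exp_neg_mul, abs_of_nonneg (by positivity)]
  exact mul_le_of_le_one_right (by positivity) exp_le_one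

theorem abs_iteratedDeriv_heatKernel_line_le {t : ℝ} (ht : 0 ≤ t)
    (x y : EuclideanSpace ℝ (Fin d)) (n : ℕ) (s : ℝ) :
    |iteratedDeriv n (fun s : ℝ => heatKernel d (x + s • y) t) s| ≤
      (4 * π * t) ^ (-(d : ℝ) / 2) * ((‖y‖ / √t) ^ n * (Gamma ((n + 1) / 2) / √π)) := by
  have sqrt_eq : 2 * √(1 / (4 * t)) * ‖y‖ = ‖y‖ / √t := by
    rw [Real.sqrt_div zero_le_one, sqrt_four_mul, Real.sqrt_one]
    field_simp
  simp only [heatKernel_eq_exp_neg_mul]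
  rw [iteratedDeriv_const_mul_field, abs_mul, abs_of_nonneg (by positivity), ← sqrt_eq]
  gcongr
  exact abs_iteratedDeriv_exp_neg_mul_norm_sq_le (by positivity) x y n s

theorem heatTaylor_eq_sum_neg (k : ℕ) (x y : EuclideanSpace ℝ (Fin d)) (t : ℝ) :
    heatTaylor d k x y t = ∑ j ∈ Finset.range (k + 1), ∑ α ∈ Finset.Nat.antidiagonalTuple d j,
      (∏ i, (-y) i ^ α i) / (∏ i, ((α i).factorial : ℝ)) *
        Dmul d α (fun z => heatKernel d z t) x := by
  refine Finset.sum_congr rfl fun j _ => Finset.sum_congr rfl fun α _ => ?_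
  simp only [PiLp.neg_apply, neg_pow (y _), Finset.prod_mul_distrib, Finset.prod_pow_eq_pow_sum]
  ring

theorem heatTaylor_mul_eq_sum (k : ℕ) (x y : EuclideanSpace ℝ (Fin d)) (t a : ℝ) :
    heatTaylor d k x y t * a =
      ∑ j ∈ Finset.range (k + 1), ∑ α ∈ Finset.Nat.antidiagonalTuple d j,
        ((-1 : ℝ) ^ (∑ i, α i) / ∏ i, ((α i).factorial : ℝ)) * ((∏ i, y i ^ α i) * a) *
          Dmul d α (fun z => heatKernel d z t) x := by
  simp only [heatTaylor, Finset.sum_mul]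
  refine Finset.sum_congr rfl fun j _ => Finset.sum_congr rfl fun α _ => ?_
  ring

theorem abs_heatKernel_sub_heatTaylor_le {t : ℝ} (ht : 0 ≤ t) (k : ℕ)
    (x y : EuclideanSpace ℝ (Fin d)) :
    |heatKernel d (x - y) t - heatTaylor d k x y t| ≤
      (4 * π * t) ^ (-(d : ℝ) / 2) *
        ((‖y‖ / √t) ^ (k + 1) * (Gamma (((k + 1 : ℕ) + 1) / 2) / √π)) / (k + 1).factorial := by
  have taylor_bound := abs_add_sub_sum_Dmul_le (contDiff_heatKernel t) x (-y)
    (abs_iteratedDeriv_heatKernel_line_le ht x (-y) (k + 1))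
  rw [norm_neg, ← sub_eq_add_neg, ← heatTaylor_eq_sum_neg] at taylor_bound
  exact taylor_bound

theorem abs_prod_pow_le_norm_pow (α : Fin d → ℕ) (y : EuclideanSpace ℝ (Fin d)) :
    |∏ i, y i ^ α i| ≤ ‖y‖ ^ ∑ i, α i := by
  rw [Finset.abs_prod, ← Finset.prod_pow_eq_pow_sum]
  gcongr with i
  rw [abs_pow]
  gcongr
  exact PiLp.norm_apply_le y i

section

variable [NeZero d] {b B : ℝ} {u : EuclideanSpace ℝ (Fin d) → ℝ}

theorem integrable_prod_pow_mul (hb : 0 < b) (hum : AEStronglyMeasurable u)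
    (hu : ∀ᵐ y, |u y| ≤ B * rexp (-b * ‖y‖ ^ 2)) (α : Fin d → ℕ) :
    Integrable fun y => (∏ i, y i ^ α i) * u y :=
  integrable_mul_of_abs_le (A := 1) hb (by fun_prop)
    (fun y => by simpa using abs_prod_pow_le_norm_pow α y) hum hu

theorem integrable_heatKernel_mul (hb : 0 < b) (hum : AEStronglyMeasurable u)
    (hu : ∀ᵐ y, |u y| ≤ B * rexp (-b * ‖y‖ ^ 2)) {t : ℝ} (ht : 0 ≤ t)
    (x : EuclideanSpace ℝ (Fin d)) :
    Integrable fun y => heatKernel d (x - y) t * u y :=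
  have continuous_kernel : Continuous fun y => heatKernel d (x - y) t :=
    (contDiff_heatKernel t).continuous.comp (by fun_prop)
  integrable_mul_of_abs_le (n := 0) hb continuous_kernel.aestronglyMeasurable
    (fun y => by simpa using abs_heatKernel_le (x - y) ht) hum hu

theorem integrable_heatTaylor_mul (hb : 0 < b) (hum : AEStronglyMeasurable u)
    (hu : ∀ᵐ y, |u y| ≤ B * rexp (-b * ‖y‖ ^ 2)) (k : ℕ) (x : EuclideanSpace ℝ (Fin d)) (t : ℝ) :
    Integrable fun y => heatTaylor d k x y t * u y := by
  simp only [heatTaylor_mul_eq_sum]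
  exact integrable_finsetSum _ fun j _ => integrable_finsetSum _ fun α _ =>
    ((integrable_prod_pow_mul hb hum hu α).const_mul _).mul_const _

theorem integral_heatTaylor_mul (hb : 0 < b) (hum : AEStronglyMeasurable u)
    (hu : ∀ᵐ y, |u y| ≤ B * rexp (-b * ‖y‖ ^ 2)) (k : ℕ) (x : EuclideanSpace ℝ (Fin d)) (t : ℝ) :
    ∫ y, heatTaylor d k x y t * u y = heatApprox d k u x t := by
  have integrable_term (c e : ℝ) (α : Fin d → ℕ) :
      Integrable fun y => c * ((∏ i, y i ^ α i) * u y) * e :=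
    ((integrable_prod_pow_mul hb hum hu α).const_mul c).mul_const e
  simp only [heatTaylor_mul_eq_sum]
  rw [integral_finsetSum _ fun j _ => integrable_finsetSum _ fun α _ => integrable_term _ _ α]
  refine Finset.sum_congr rfl fun j _ => ?_
  rw [integral_finsetSum _ fun α _ => integrable_term _ _ α]
  simp only [integral_mul_const, integral_const_mul]

end

theorem gaussian_scale_eq {t t₀ : ℝ} (ht : 0 < t) (ht₀ : 0 < t₀) (n d : ℕ) :
    (4 * π * t) ^ (-(d : ℝ) / 2) * √π ^ d * (1 / (4 * t₀)) ^ (-(n + d : ℝ) / 2) / √t ^ n =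
      2 ^ n * (t₀ / t) ^ ((n + d : ℝ) / 2) := by
  rw [← Nat.cast_add, rpow_neg_natCast_div_two (by positivity),
    rpow_neg_natCast_div_two (by positivity), Real.rpow_div_two_eq_sqrt _ (by positivity),
    Real.rpow_natCast, mul_assoc 4, Real.sqrt_div zero_le_one, sqrt_four_mul, sqrt_four_mul,
    Real.sqrt_mul pi_pos.le, Real.sqrt_div ht₀.le, Real.sqrt_one]
  simp only [pow_add, mul_pow, div_pow, one_pow]
  field_simp

theorem abs_integral_heatKernel_mul_sub_heatApprox_le [NeZero d] {C t t₀ : ℝ} (ht : 0 < t)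
    (ht₀ : 0 < t₀) {u : EuclideanSpace ℝ (Fin d) → ℝ} (hum : AEStronglyMeasurable u)
    (hu : ∀ᵐ y, |u y| ≤ C * rexp (-‖y‖ ^ 2 / (4 * t₀))) (k : ℕ) (x : EuclideanSpace ℝ (Fin d)) :
    |(∫ y, heatKernel d (x - y) t * u y) - heatApprox d k u x t| ≤
      C * (t₀ / t) ^ (((k + 1 : ℕ) + d : ℝ) / 2) / (k + 1).factorial *
        (2 ^ (k + 1) * Gamma (((k + 1 : ℕ) + 1) / 2) * Gamma (((k + 1 : ℕ) + d) / 2) /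
          (√π * Gamma (d / 2))) := by
  have hb : 0 < 1 / (4 * t₀) := by positivity
  replace hu : ∀ᵐ y, |u y| ≤ C * rexp (-(1 / (4 * t₀)) * ‖y‖ ^ 2) := by
    refine hu.mono fun y hy => hy.trans_eq ?_
    ring_nf
  set Γn := Gamma (((k + 1 : ℕ) + 1) / 2)
  have kernel_bound (y : EuclideanSpace ℝ (Fin d)) :
      |heatKernel d (x - y) t - heatTaylor d k x y t| ≤
        (4 * π * t) ^ (-(d : ℝ) / 2) * (Γn / √π) / √t ^ (k + 1) / (k + 1).factorial *
          ‖y‖ ^ (k + 1) :=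
    (abs_heatKernel_sub_heatTaylor_le ht.le k x y).trans_eq (by rw [div_pow]; ring)
  rw [← integral_heatTaylor_mul hb hum hu,
    ← integral_sub (integrable_heatKernel_mul hb hum hu ht.le x)
      (integrable_heatTaylor_mul hb hum hu k x t)]
  simp only [← sub_mul]
  refine (abs_integral_mul_le hb kernel_bound hu).trans_eq ?_
  rw [integral_norm_rpow_mul_exp_neg_mul_sq hb (by positivity), finrank_euclideanSpace_fin]
  linear_combination C * Γn * Gamma (((k + 1 : ℕ) + d) / 2) / (√π * Gamma (d / 2) *
    (k + 1).factorial) * gaussian_scale_eq ht ht₀ (k + 1) d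

end HeatKernel

/-- Convergence Condition, quantitative form: if `|u₀| ≤ C e^{-|x|²/(4t₀)}`
a.e., then the approximation error is bounded by `G(k)` uniformly in `x`. -/
theorem stmt_8 (d k : ℕ) (hd : 1 ≤ d) (C t₀ : ℝ) (hC : 0 < C) (ht₀ : 0 < t₀)
    (u₀ : EuclideanSpace ℝ (Fin d) → ℝ) (hmeas : Measurable u₀)
    (hbound : ∀ᵐ (x : EuclideanSpace ℝ (Fin d)) ∂volume,
      |u₀ x| ≤ C * Real.exp (-‖x‖ ^ 2 / (4 * t₀)))
    (t : ℝ) (ht : 0 < t) (x : EuclideanSpace ℝ (Fin d)) :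
    |(∫ y, heatKernel d (x - y) t * u₀ y) - heatApprox d k u₀ x t| ≤
      C * (t₀ / t) ^ (((k : ℝ) + d + 1) / 2) *
        (1 + ((k : ℝ) + 1) / d) ^ (-(d : ℝ) / 12) *
        ((k + d).factorial : ℝ) / (((k + 1).factorial : ℝ) * ((d - 1).factorial : ℝ)) := by
  have : NeZero d := ⟨by omega⟩
  calc |(∫ y, heatKernel d (x - y) t * u₀ y) - heatApprox d k u₀ x t|
      ≤ C * (t₀ / t) ^ (((k + 1 : ℕ) + d : ℝ) / 2) / (k + 1).factorial *
          (2 ^ (k + 1) * Gamma (((k + 1 : ℕ) + 1) / 2) * Gamma (((k + 1 : ℕ) + d) / 2) /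
            (√π * Gamma (d / 2))) :=
        abs_integral_heatKernel_mul_sub_heatApprox_le ht ht₀ hmeas.aestronglyMeasurable hbound k x
    _ ≤ C * (t₀ / t) ^ (((k + 1 : ℕ) + d : ℝ) / 2) / (k + 1).factorial *
          ((1 + (k + 1 : ℕ) / d) ^ (-(d : ℝ) / 12) *
            ((k + 1 + d - 1).factorial / (d - 1).factorial)) := by
        gcongr
        exact Gamma_mul_Gamma_div_Gamma_le k.succ_pos hd
    _ = _ := by
        rw [Nat.add_right_comm, Nat.add_sub_cancel]
        push_cast
        rw [add_right_comm (k : ℝ) 1 d]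
        field_simp

end
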